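/- Let M ≥ 1 be an integer, η ∈ (0,1), and let r, r′, D be integers with 1 ≤ r ≤ r′ ≤ M, D ≥ r′+1, and (D+1)·η ≥ M. Define the degree distribution Ψ^r on {1, …, D} by Ψ^r_d = 0 for d ≤ r, Ψ^r_d = r/(d(d−1)) for r+1 ≤ d ≤ D−1, and Ψ^r_D = r/(D−1). Then S_{r′}(x; Ψ^r) + r·ln(1−x) > 0 for all x with 0 < x ≤ 1−η. -/

import Mathlib

/-- The regularized incomplete beta function with positive integer parameters `a`, `b`. -/
noncomputable def incBeta (a b : ℕ) (x : ℝ) : ℝ :=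
  ∑ j ∈ Finset.Icc a (a + b - 1),
    (Nat.choose (a + b - 1) j : ℝ) * x ^ j * (1 - x) ^ (a + b - 1 - j)

/-- `S_r(x; Ψ) = ∑_{d=r+1}^D d Ψ_d I_{d-r,r}(x) + ∑_{d=1}^{min(r,D)} d Ψ_d`. -/
noncomputable def Sfun (D r : ℕ) (Ψ : ℕ → ℝ) (x : ℝ) : ℝ :=
  (∑ d ∈ Finset.Icc (r + 1) D, (d : ℝ) * Ψ d * incBeta (d - r) r x) +
    ∑ d ∈ Finset.Icc 1 (min r D), (d : ℝ) * Ψ d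

/-- The degree distribution `Ψ^r`: `Ψ^r_d = 0` for `d ≤ r`,
`Ψ^r_d = r/(d(d-1))` for `r+1 ≤ d ≤ D-1`, `Ψ^r_D = r/(D-1)`. -/
noncomputable def PsiR (r D : ℕ) : ℕ → ℝ := fun d =>
  if d ≤ r then 0
  else if d < D then (r : ℝ) / ((d : ℝ) * ((d : ℝ) - 1))
  else if d = D then (r : ℝ) / ((D : ℝ) - 1)
  else 0

/-!
Let `p n = P(Bin(n, y) < r')` with `y = 1 - x`. Since `I_{d-r',r'}(x) = p (d - 1)` for `d > r'`, and
`p (d - 1) = 1` for `d ≤ r'`, both sums of `S_{r'}` merge into `∑ d Ψ_d p (d - 1)`. For `Ψ^r` this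
is `r (∑_{r ≤ n < D} p n / n + p (D - 1))`.

The full series is `∑_{n ≥ 1} p n / n = -ln y + H_{r'-1}`: each point mass contributes
`∑_n P(Bin(n, y) = k) / n = 1 / k` for `k ≥ 1`, and `k = 0` gives the logarithm. The terms with
`n < r` add up to at most `H_{r-1}`, so everything rests on `∑_{n ≥ D} p n / n < p (D - 1)`.
If `T` is the time of the `r'`-th success in Bernoulli trials with success probability `y`, then
`p n = P(T > n)` and `∑_{n ≥ N} p n = E[max (T - N) 0] ≤ P(T > N) r' / y`. For `N = D - 1` and
`r' ≤ (D + 1) y` this gives `∑_{n ≥ D} p n ≤ D p (D - 1)`, and `1 / n < 1 / D` beyond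
the first term makes the inequality strict.
-/

/-- The binomial point mass `P(Bin(n, y) = k)`, for an arbitrary real `y`. -/
noncomputable def binomMass (n k : ℕ) (y : ℝ) : ℝ :=
  (n.choose k : ℝ) * y ^ k * (1 - y) ^ (n - k)

/-- The binomial lower tail `P(Bin(n, y) < s)`. The inequality is strict, so that `s` is the second
parameter of the incomplete beta function which this tail represents. -/
noncomputable def binomTail (n s : ℕ) (y : ℝ) : ℝ :=
  ∑ k ∈ Finset.range s, binomMass n k y

section Recursion

variable (n k s : ℕ) (y : ℝ)

lemma binomMass_zero_right : binomMass n 0 y = (1 - y) ^ n := by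
  simp [binomMass]

lemma binomMass_succ_zero : binomMass (n + 1) 0 y = (1 - y) * binomMass n 0 y := by
  simp only [binomMass_zero_right, pow_succ']

lemma binomMass_eq_zero_of_lt {n k : ℕ} (h : n < k) : binomMass n k y = 0 := by
  simp [binomMass, Nat.choose_eq_zero_of_lt h]

lemma binomMass_succ_succ :
    binomMass (n + 1) (k + 1) y = y * binomMass n k y + (1 - y) * binomMass n (k + 1) y := by
  rcases lt_or_ge n (k + 1) with h | h
  · rw [binomMass_eq_zero_of_lt y h]
    simp only [binomMass, Nat.choose_succ_succ, Nat.choose_eq_zero_of_lt h,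
      Nat.add_sub_add_right, add_zero]
    ring
  · obtain ⟨m, rfl⟩ := Nat.exists_eq_add_of_le' h
    have h_sub : m + (k + 1) - k = m + 1 := by omega
    simp only [binomMass, Nat.choose_succ_succ, Nat.add_sub_add_right, Nat.add_sub_cancel, h_sub]
    push_cast
    ring

lemma binomMass_succ_succ_div :
    binomMass (n + 1) (k + 1) y / (n + 1) = y / (k + 1) * binomMass n k y := by
  have h_choose : ((n + 1).choose (k + 1) : ℝ) * (k + 1) = (n + 1) * n.choose k := by
    exact_mod_cast (Nat.add_one_mul_choose_eq n k).symm
  simp only [binomMass, Nat.add_sub_add_right]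
  field_simp
  linear_combination y ^ (k + 1) * (1 - y) ^ (n - k) * h_choose

lemma binomTail_zero_right : binomTail n 0 y = 0 :=
  Finset.sum_range_zero _

lemma binomTail_succ_right : binomTail n (s + 1) y = binomTail n s y + binomMass n s y :=
  Finset.sum_range_succ _ _

lemma binomTail_zero_succ : binomTail 0 (s + 1) y = 1 := by
  simp [binomTail, Finset.sum_range_succ', binomMass]

lemma binomTail_succ_succ :
    binomTail (n + 1) (s + 1) y = (1 - y) * binomTail n (s + 1) y + y * binomTail n s y := by
  induction s with
  | zero => simp only [binomTail_succ_right, binomTail_zero_right, binomMass_succ_zero]; ring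
  | succ s ih =>
    rw [binomTail_succ_right, ih, binomMass_succ_succ, binomTail_succ_right n (s + 1),
      binomTail_succ_right n s]
    ring

lemma binomTail_eq_one_of_lt {n s : ℕ} (h : n < s) : binomTail n s y = 1 := by
  induction n generalizing s with
  | zero =>
    obtain ⟨s, rfl⟩ := Nat.exists_eq_add_one_of_ne_zero h.ne'
    exact binomTail_zero_succ s y
  | succ n ih =>
    obtain ⟨s, rfl⟩ := Nat.exists_eq_add_one_of_ne_zero (Nat.ne_zero_of_lt h)
    rw [binomTail_succ_succ, ih (by omega), ih (by omega)]
    ring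

end Recursion

section Bounds

variable {y : ℝ} (hy₀ : 0 ≤ y)
include hy₀

lemma binomMass_nonneg (hy₁ : y ≤ 1) (n k : ℕ) : 0 ≤ binomMass n k y := by
  have : 0 ≤ 1 - y := sub_nonneg.mpr hy₁
  unfold binomMass
  positivity

lemma binomTail_nonneg (hy₁ : y ≤ 1) (n s : ℕ) : 0 ≤ binomTail n s y :=
  Finset.sum_nonneg fun k _ => binomMass_nonneg hy₀ hy₁ n k

lemma monotone_binomTail (hy₁ : y ≤ 1) (n : ℕ) : Monotone fun s => binomTail n s y :=
  monotone_nat_of_le_succ fun s => by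
    rw [binomTail_succ_right]
    exact le_add_of_nonneg_right (binomMass_nonneg hy₀ hy₁ n s)

lemma binomTail_le_one (hy₁ : y ≤ 1) (n s : ℕ) : binomTail n s y ≤ 1 := by
  have h_le := monotone_binomTail hy₀ hy₁ n (le_max_left s (n + 1))
  exact h_le.trans_eq (binomTail_eq_one_of_lt y (lt_max_of_lt_right n.lt_succ_self))

lemma binomTail_pos (hy₁ : y < 1) (n : ℕ) {s : ℕ} (hs : 0 < s) : 0 < binomTail n s y := by
  have h_mass : 0 < binomMass n 0 y := by
    rw [binomMass_zero_right]
    exact pow_pos (sub_pos.mpr hy₁) n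
  exact h_mass.trans_le <| Finset.single_le_sum (f := fun k => binomMass n k y)
    (fun k _ => binomMass_nonneg hy₀ hy₁.le n k) (Finset.mem_range.mpr hs)

end Bounds

section Series

variable {y : ℝ} (hy : |1 - y| < 1)
include hy

lemma hasSum_binomMass (k : ℕ) : HasSum (fun n => binomMass n k y) y⁻¹ := by
  have hy_pos : 0 < y := by linarith [(abs_lt.mp hy).2]
  have h_head : ∑ n ∈ Finset.range k, binomMass n k y = 0 :=
    Finset.sum_eq_zero fun n hn => binomMass_eq_zero_of_lt y (Finset.mem_range.mp hn)
  have h_geom := (hasSum_choose_mul_geometric_of_norm_lt_one k hy).mul_left (y ^ k)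
  have h_value : y ^ k * (1 / (1 - (1 - y)) ^ (k + 1)) = y⁻¹ := by
    rw [sub_sub_cancel, pow_succ]
    field_simp
  rw [h_value] at h_geom
  rw [← hasSum_nat_add_iff' k, h_head, sub_zero]
  refine h_geom.congr_fun fun n => ?_
  rw [binomMass, Nat.add_sub_cancel]
  ring

lemma hasSum_binomMass_succ_div (k : ℕ) :
    HasSum (fun n : ℕ => binomMass (n + 1) (k + 1) y / (n + 1)) ((k : ℝ) + 1)⁻¹ := by
  have hy_pos : 0 < y := by linarith [(abs_lt.mp hy).2]
  have h_value : y / (k + 1) * y⁻¹ = ((k : ℝ) + 1)⁻¹ := by field_simp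
  simp only [binomMass_succ_succ_div, ← h_value]
  exact (hasSum_binomMass hy k).mul_left _

lemma summable_binomTail (s : ℕ) : Summable fun n => binomTail n s y :=
  summable_sum fun k _ => (hasSum_binomMass hy k).summable

lemma hasSum_binomTail_succ_div (s : ℕ) :
    HasSum (fun n : ℕ => binomTail (n + 1) (s + 1) y / (n + 1)) (-Real.log y + harmonic s) := by
  induction s with
  | zero =>
    simpa [binomTail_succ_right, binomTail_zero_right, binomMass_zero_right] using
      Real.hasSum_pow_div_log_of_abs_lt_one hy
  | succ s ih =>
    simp only [binomTail_succ_right _ (s + 1), add_div, harmonic_succ, Rat.cast_add, ← add_assoc]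
    push_cast
    exact ih.add (hasSum_binomMass_succ_div hy s)

lemma mul_tsum_binomTail_succ (N s : ℕ) :
    y * ∑' n, binomTail (n + N) (s + 1) y
      = binomTail N (s + 1) y + y * ∑' n, binomTail (n + N) s y := by
  have h_summable (t : ℕ) : Summable fun n => binomTail (n + N) t y :=
    (summable_binomTail hy t).comp_injective (add_left_injective N)
  have h_shift : ∑' n, binomTail (n + N) (s + 1) y
      = binomTail N (s + 1) y + ∑' n, binomTail (n + N + 1) (s + 1) y := by
    rw [(h_summable (s + 1)).tsum_eq_zero_add, zero_add]
    simp only [add_right_comm _ 1 N]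
  have h_rec : ∑' n, binomTail (n + N + 1) (s + 1) y
      = (1 - y) * ∑' n, binomTail (n + N) (s + 1) y + y * ∑' n, binomTail (n + N) s y := by
    simp only [binomTail_succ_succ]
    rw [((h_summable (s + 1)).mul_left _).tsum_add ((h_summable s).mul_left _),
      tsum_mul_left, tsum_mul_left]
  linear_combination h_shift + h_rec

end Series

section TailEstimate

variable {y : ℝ} (hy₀ : 0 < y)
include hy₀

lemma abs_one_sub_lt_one (hy₁ : y ≤ 1) : |1 - y| < 1 := by
  rw [abs_lt]
  constructor <;> linarith

lemma mul_tsum_binomTail_le (hy₁ : y ≤ 1) (N s : ℕ) :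
    y * ∑' n, binomTail (n + N) s y ≤ s * binomTail N s y := by
  induction s with
  | zero => simp [binomTail_zero_right]
  | succ s ih =>
    have h_mono := monotone_binomTail hy₀.le hy₁ N s.le_succ
    calc y * ∑' n, binomTail (n + N) (s + 1) y
        = binomTail N (s + 1) y + y * ∑' n, binomTail (n + N) s y :=
          mul_tsum_binomTail_succ (abs_one_sub_lt_one hy₀ hy₁) N s
      _ ≤ binomTail N (s + 1) y + s * binomTail N (s + 1) y := by
          have h_mul := mul_le_mul_of_nonneg_left h_mono s.cast_nonneg
          exact add_le_add_right (ih.trans h_mul) _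
      _ = (s + 1 : ℕ) * binomTail N (s + 1) y := by push_cast; ring

lemma tsum_binomTail_succ_le (hy₁ : y ≤ 1) {N s : ℕ} (h : (s : ℝ) ≤ (N + 2) * y) :
    ∑' n, binomTail (n + N + 1) s y ≤ (N + 1) * binomTail N s y := by
  have h_summable := (summable_nat_add_iff N).mpr
    (summable_binomTail (abs_one_sub_lt_one hy₀ hy₁) s)
  have h_mul : y * ∑' n, binomTail (n + N) s y ≤ y * ((N + 2) * binomTail N s y) :=
    calc y * ∑' n, binomTail (n + N) s y
        ≤ s * binomTail N s y := mul_tsum_binomTail_le hy₀ hy₁ N s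
      _ ≤ (N + 2) * y * binomTail N s y := by
          gcongr
          exact binomTail_nonneg hy₀.le hy₁ N s
      _ = y * ((N + 2) * binomTail N s y) := by ring
  have h_le := le_of_mul_le_mul_left h_mul hy₀
  rw [h_summable.tsum_eq_zero_add, zero_add] at h_le
  simp only [add_right_comm _ 1 N] at h_le
  linarith

lemma tsum_binomTail_succ_div_lt (hy₁ : y < 1) {N s : ℕ} (hs : 0 < s)
    (h : (s : ℝ) ≤ (N + 2) * y) :
    ∑' n : ℕ, binomTail (n + N + 1) s y / ((n + N : ℕ) + 1) < binomTail N s y := by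
  have h_summable : Summable fun n => binomTail (n + N + 1) s y / ((N : ℝ) + 1) :=
    ((summable_nat_add_iff (N + 1)).mpr
      (summable_binomTail (abs_one_sub_lt_one hy₀ hy₁.le) s)).div_const _
  have h_le (n : ℕ) : binomTail (n + N + 1) s y / ((n + N : ℕ) + 1)
      ≤ binomTail (n + N + 1) s y / ((N : ℝ) + 1) := by
    have := binomTail_nonneg hy₀.le hy₁.le (n + N + 1) s
    gcongr
    omega
  have h_lt : binomTail (1 + N + 1) s y / ((1 + N : ℕ) + 1)
      < binomTail (1 + N + 1) s y / ((N : ℝ) + 1) := by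
    have := binomTail_pos hy₀.le hy₁ (1 + N + 1) hs
    gcongr
    omega
  have h_summable_div : Summable fun n : ℕ => binomTail (n + N + 1) s y / ((n + N : ℕ) + 1) :=
    h_summable.of_nonneg_of_le
      (fun n => div_nonneg (binomTail_nonneg hy₀.le hy₁.le _ s) (by positivity)) h_le
  calc ∑' n : ℕ, binomTail (n + N + 1) s y / ((n + N : ℕ) + 1)
      < ∑' n, binomTail (n + N + 1) s y / ((N : ℝ) + 1) :=
        h_summable_div.tsum_lt_tsum h_le h_lt h_summable
    _ = (∑' n, binomTail (n + N + 1) s y) / ((N : ℝ) + 1) := tsum_div_const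
    _ ≤ binomTail N s y := by
        rw [div_le_iff₀' (by positivity)]
        exact tsum_binomTail_succ_le hy₀ hy₁.le h

lemma neg_log_add_harmonic_lt (hy₁ : y < 1) {N s : ℕ} (h : (s : ℝ) + 1 ≤ (N + 2) * y) :
    -Real.log y + harmonic s
      < ∑ n ∈ Finset.range N, binomTail (n + 1) (s + 1) y / (n + 1) + binomTail N (s + 1) y := by
  have h_hasSum := hasSum_binomTail_succ_div (abs_one_sub_lt_one hy₀ hy₁.le) s
  rw [← h_hasSum.tsum_eq, ← h_hasSum.summable.sum_add_tsum_nat_add N]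
  gcongr
  exact tsum_binomTail_succ_div_lt hy₀ hy₁ s.succ_pos (by exact_mod_cast h)

end TailEstimate

lemma monotone_harmonic : Monotone harmonic :=
  monotone_nat_of_le_succ fun n => by
    rw [harmonic_succ]
    exact le_add_of_nonneg_right (by positivity)

lemma sum_binomTail_succ_div_le_harmonic {y : ℝ} (hy₀ : 0 ≤ y) (hy₁ : y ≤ 1) (q s : ℕ) :
    ∑ n ∈ Finset.range q, binomTail (n + 1) s y / (n + 1) ≤ harmonic q := by
  simp only [harmonic, Rat.cast_sum, ← one_div]
  push_cast
  gcongr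
  exact binomTail_le_one hy₀ hy₁ _ s

lemma incBeta_succ (a b : ℕ) (x : ℝ) : incBeta (a + 1) b x = binomTail (a + b) b (1 - x) := by
  have h_top : a + 1 + b - 1 = a + b := by omega
  have h_Icc : Finset.Icc (a + 1) (a + b) = Finset.Ico (a + b + 1 - b) (a + b + 1 - 0) := by
    ext j
    simp only [Finset.mem_Icc, Finset.mem_Ico]
    omega
  rw [incBeta, binomTail, h_top, h_Icc, ← Finset.sum_Ico_reflect _ _ (by omega),
    Finset.range_eq_Ico]
  refine Finset.sum_congr rfl fun k hk => ?_
  have hk_le : k ≤ a + b := by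
    have := (Finset.mem_Ico.mp hk).2
    omega
  rw [binomMass, Nat.choose_symm hk_le, Nat.sub_sub_self hk_le, sub_sub_cancel]
  ring

lemma Sfun_eq_sum_range_binomTail (D r : ℕ) (Ψ : ℕ → ℝ) (x : ℝ) :
    Sfun D r Ψ x
      = ∑ n ∈ Finset.range D, ((n + 1 : ℕ) : ℝ) * Ψ (n + 1) * binomTail n r (1 - x) := by
  have h_beta : ∑ d ∈ Finset.Icc (r + 1) D, (d : ℝ) * Ψ d * incBeta (d - r) r x
      = ∑ n ∈ Finset.Ico (min r D) D, ((n + 1 : ℕ) : ℝ) * Ψ (n + 1) * binomTail n r (1 - x) := by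
    have h_Icc : Finset.Icc (r + 1) D = Finset.Ico (min r D + 1) (D + 1) := by
      ext d
      simp only [Finset.mem_Icc, Finset.mem_Ico]
      omega
    rw [h_Icc, ← Finset.sum_Ico_add' _ _ _ 1]
    refine Finset.sum_congr rfl fun n hn => ?_
    have hrn : r ≤ n := by
      have := Finset.mem_Ico.mp hn
      omega
    rw [Nat.sub_add_comm hrn, incBeta_succ, Nat.sub_add_cancel hrn]
  have h_const : ∑ d ∈ Finset.Icc 1 (min r D), (d : ℝ) * Ψ d
      = ∑ n ∈ Finset.range (min r D),
          ((n + 1 : ℕ) : ℝ) * Ψ (n + 1) * binomTail n r (1 - x) := by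
    rw [Finset.range_eq_Ico, ← Finset.Ico_add_one_right_eq_Icc,
      ← Finset.sum_Ico_add' _ 0 _ 1]
    refine Finset.sum_congr rfl fun n hn => ?_
    rw [binomTail_eq_one_of_lt _ (lt_min_iff.mp (Finset.mem_Ico.mp hn).2).1, mul_one]
  rw [Sfun, h_beta, h_const, add_comm, Finset.sum_range_add_sum_Ico _ (min_le_right r D)]

lemma PsiR_of_le {r d : ℕ} (h : d ≤ r) (D : ℕ) : PsiR r D d = 0 :=
  if_pos h

lemma mul_PsiR_of_lt {r d D : ℕ} (hrd : r < d) (hdD : d < D) :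
    (d : ℝ) * PsiR r D d = r / ((d : ℝ) - 1) := by
  have hd : (d : ℝ) ≠ 0 := by norm_cast; omega
  rw [PsiR, if_neg (by omega), if_pos hdD]
  field_simp

lemma mul_PsiR_self {r D : ℕ} (hr : 0 < r) (hrD : r < D) :
    (D : ℝ) * PsiR r D D = r / ((D : ℝ) - 1) + r := by
  have hD : (D : ℝ) - 1 ≠ 0 := by
    rw [sub_ne_zero]
    norm_cast
    omega
  rw [PsiR, if_neg (by omega), if_neg (lt_irrefl D), if_pos rfl]
  field_simp
  ring

lemma Sfun_PsiR_succ {q N : ℕ} (hqN : q < N) (s : ℕ) (x : ℝ) :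
    Sfun (N + 1) s (PsiR (q + 1) (N + 1)) x
      = (q + 1) * (∑ n ∈ Finset.Ico q N, binomTail (n + 1) s (1 - x) / (n + 1)
          + binomTail N s (1 - x)) := by
  obtain ⟨L, rfl⟩ := Nat.exists_eq_add_one_of_ne_zero (Nat.ne_zero_of_lt hqN)
  have hqL : q ≤ L := Nat.lt_succ_iff.mp hqN
  have h_low : ∑ n ∈ Finset.range (q + 1),
      ((n + 1 : ℕ) : ℝ) * PsiR (q + 1) (L + 1 + 1) (n + 1) * binomTail n s (1 - x) = 0 :=
    Finset.sum_eq_zero fun n hn => by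
      rw [PsiR_of_le (Finset.mem_range.mp hn), mul_zero, zero_mul]
  have h_mid : ∑ n ∈ Finset.Ico (q + 1) (L + 1),
      ((n + 1 : ℕ) : ℝ) * PsiR (q + 1) (L + 1 + 1) (n + 1) * binomTail n s (1 - x)
      = (q + 1) * ∑ n ∈ Finset.Ico q L, binomTail (n + 1) s (1 - x) / (n + 1) := by
    rw [← Finset.sum_Ico_add' _ _ _ 1, Finset.mul_sum]
    refine Finset.sum_congr rfl fun n hn => ?_
    have ⟨hqn, hnL⟩ := Finset.mem_Ico.mp hn
    rw [mul_PsiR_of_lt (by omega) (by omega)]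
    push_cast
    ring
  rw [Sfun_eq_sum_range_binomTail, ← Finset.sum_range_add_sum_Ico _ (by omega : q + 1 ≤ L + 1 + 1),
    h_low, Finset.sum_Ico_succ_top (by omega), h_mid, mul_PsiR_self q.succ_pos (by omega),
    Finset.sum_Ico_succ_top hqL]
  push_cast
  ring

theorem Sfun_PsiR_pos_general {r r' D : ℕ} (hr : 0 < r) (hr' : 0 < r') (hrD : r < D) {x : ℝ}
    (hx : 0 < x) (h : (r' : ℝ) ≤ (D + 1) * (1 - x)) :
    (r : ℝ) * (harmonic (r' - 1) - harmonic (r - 1))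
      < Sfun D r' (PsiR r D) x + r * Real.log (1 - x) := by
  obtain ⟨q, rfl⟩ := Nat.exists_eq_add_one_of_ne_zero hr.ne'
  obtain ⟨s, rfl⟩ := Nat.exists_eq_add_one_of_ne_zero hr'.ne'
  obtain ⟨N, rfl⟩ := Nat.exists_eq_add_one_of_ne_zero (Nat.ne_zero_of_lt hrD)
  have hqN : q < N := Nat.lt_of_succ_lt_succ hrD
  have hy₀ : 0 < 1 - x := by
    refine pos_of_mul_pos_right (lt_of_lt_of_le ?_ h) (by positivity)
    exact_mod_cast hr'
  have hy₁ : 1 - x < 1 := sub_lt_self 1 hx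
  have h_log := neg_log_add_harmonic_lt hy₀ hy₁ (N := N) (s := s) (by push_cast at h; linarith)
  have h_head := sum_binomTail_succ_div_le_harmonic hy₀.le hy₁.le q (s + 1)
  rw [← Finset.sum_range_add_sum_Ico _ hqN.le] at h_log
  rw [Sfun_PsiR_succ hqN, Nat.add_sub_cancel, Nat.add_sub_cancel, Nat.cast_add_one, ← mul_add]
  gcongr
  linarith

theorem Sfun_PsiR_pos (M : ℕ) (hM : 1 ≤ M) (η : ℝ) (hη0 : 0 < η) (hη1 : η < 1)
    (r r' D : ℕ) (hr : 1 ≤ r) (hrr' : r ≤ r') (hr'M : r' ≤ M) (hD : r' + 1 ≤ D)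
    (hDη : (M : ℝ) ≤ ((D : ℝ) + 1) * η)
    (x : ℝ) (hx0 : 0 < x) (hx1 : x ≤ 1 - η) :
    Sfun D r' (PsiR r D) x + (r : ℝ) * Real.log (1 - x) > 0 := by
  have h_budget : (r' : ℝ) ≤ (D + 1) * (1 - x) :=
    calc (r' : ℝ) ≤ M := by exact_mod_cast hr'M
      _ ≤ (D + 1) * η := hDη
      _ ≤ (D + 1) * (1 - x) := by gcongr; linarith
  have h_harmonic : (harmonic (r - 1) : ℝ) ≤ harmonic (r' - 1) := by
    exact_mod_cast monotone_harmonic (Nat.sub_le_sub_right hrr' 1)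
  exact (mul_nonneg r.cast_nonneg (sub_nonneg.mpr h_harmonic)).trans_lt
    (Sfun_PsiR_pos_general hr (hr.trans hrr') (by omega) hx0 h_budget)
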